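/- Popoviciu's inequality for quasi-arithmetic means (increasing case): let φ be continuous strictly monotone on an interval I ⊆ ℝ, ψ continuous strictly increasing on an interval J ⊆ ℝ, and f : I → J an (M_φ, M_ψ)-convex function. Then for all x, y, z ∈ I: ψ⁻¹( (1/2)·( ψ(ψ⁻¹((ψ(f(x))+ψ(f(y))+ψ(f(z)))/3)) + ψ(f(φ⁻¹((φ(x)+φ(y)+φ(z))/3))) ) ) ≥ ψ⁻¹( (1/3)·( ψ(f(M_φ(x,y))) + ψ(f(M_φ(y,z))) + ψ(f(M_φ(z,x))) ) ), where M_φ(x,y) = φ⁻¹((φ(x)+φ(y))/2). -/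

import Mathlib

/-!
Reading `f` in the coordinates given by the generators turns `(M_φ, M_ψ)`-convexity into midpoint
convexity of the continuous function `g = ψ ∘ f ∘ φ⁻¹` on the interval `φ(I)`. Such a `g` is convex,
because the parameters at which it lies below a given chord form a closed set that is stable under
midpoints. Applying `ψ` to both sides turns the claim into the classical Popoviciu inequality for
`g`.

For that inequality, two of the three points, say `x` and `y`, lie on the same side of the
barycentre `m`. Then `(y + z) / 2` and `(z + x) / 2` lie between `m` and `z`, with sum
`(3 / 2) m + (1 / 2) z`. Bounding `g` at these two points by its chord over `[m, z]` and at
`(x + y) / 2` by its chord over `[x, y]` gives the result.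
-/

open Set

section Means

theorem midpoint_eq_add_div_two {𝕜 : Type*} [Field 𝕜] [Invertible (2 : 𝕜)] (x y : 𝕜) :
    midpoint 𝕜 x y = (x + y) / 2 := by
  rw [midpoint_eq_smul_add, smul_eq_mul, invOf_eq_inv, inv_mul_eq_div]

variable {𝕜 : Type*} [Field 𝕜] [LinearOrder 𝕜] [IsStrictOrderedRing 𝕜] {s : Set 𝕜} {x y z : 𝕜}

theorem add_div_two_mem_of_convex (hs : Convex 𝕜 s) (hx : x ∈ s) (hy : y ∈ s) : (x + y) / 2 ∈ s :=
  midpoint_eq_add_div_two x y ▸ hs.midpoint_mem hx hy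

theorem add_add_div_three_mem_of_convex (hs : Convex 𝕜 s) (hx : x ∈ s) (hy : y ∈ s) (hz : z ∈ s) :
    (x + y + z) / 3 ∈ s := by
  convert hs (add_div_two_mem_of_convex hs hx hy) hz (show (0 : 𝕜) ≤ 2 / 3 by norm_num)
    (show (0 : 𝕜) ≤ 1 / 3 by norm_num) (by norm_num) using 1
  simp only [smul_eq_mul]
  ring

end Means

section Popoviciu

variable {𝕜 E β : Type*} [Field 𝕜] [LinearOrder 𝕜] [IsStrictOrderedRing 𝕜]
  [AddCommGroup E] [Module 𝕜 E]
  [AddCommGroup β] [PartialOrder β] [IsOrderedAddMonoid β] [Module 𝕜 β]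

theorem add_le_of_convexOn_of_mem_segment {s : Set E} {g : E → β} (hg : ConvexOn 𝕜 s g)
    {u v p q : E} (hu : u ∈ s) (hv : v ∈ s) (hp : p ∈ segment 𝕜 u v) (hq : q ∈ segment 𝕜 u v)
    {a b : 𝕜} (hab : a + b = 2) (hpq : p + q = a • u + b • v) :
    g p + g q ≤ a • g u + b • g v := by
  obtain ⟨a₁, b₁, ha₁, hb₁, h₁, rfl⟩ := hp
  obtain ⟨a₂, b₂, ha₂, hb₂, h₂, rfl⟩ := hq
  rcases eq_or_ne u v with rfl | huv
  · simp only [Convex.combo_self h₁, Convex.combo_self h₂, ← add_smul, hab, two_smul, le_refl]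
  have hb : b₁ + b₂ = b := by
    have h : (b₁ + b₂ - b) • (v - u) = 0 := by
      calc (b₁ + b₂ - b) • (v - u)
          = (a₁ • u + b₁ • v + (a₂ • u + b₂ • v)) - (a • u + b • v)
              + (a + b - ((a₁ + b₁) + (a₂ + b₂))) • u := by module
        _ = 0 := by
            rw [hpq, hab, h₁, h₂, one_add_one_eq_two, sub_self, sub_self, zero_smul, add_zero]
    exact sub_eq_zero.1 ((smul_eq_zero.1 h).resolve_right (sub_ne_zero.2 huv.symm))
  have ha : a₁ + a₂ = a := by linear_combination h₁ + h₂ - hab - hb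
  calc g (a₁ • u + b₁ • v) + g (a₂ • u + b₂ • v)
      ≤ (a₁ • g u + b₁ • g v) + (a₂ • g u + b₂ • g v) :=
        add_le_add (hg.2 hu hv ha₁ hb₁ h₁) (hg.2 hu hv ha₂ hb₂ h₂)
    _ = a • g u + b • g v := by rw [← ha, ← hb]; module

variable [PosSMulMono 𝕜 β] {s : Set 𝕜} {g : 𝕜 → β}

theorem popoviciu_of_convexOn_of_mem_segment (hg : ConvexOn 𝕜 s g) {x y z m : 𝕜}
    (hx : x ∈ s) (hy : y ∈ s) (hz : z ∈ s) (hm : m ∈ s) (hsum : x + y + z = 3 * m)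
    (hyz : (y + z) / 2 ∈ segment 𝕜 m z) (hzx : (z + x) / 2 ∈ segment 𝕜 m z) :
    (1 / 3 : 𝕜) • (g ((x + y) / 2) + g ((y + z) / 2) + g ((z + x) / 2)) ≤
      (1 / 2 : 𝕜) • ((1 / 3 : 𝕜) • (g x + g y + g z) + g m) := by
  have h₁ : g ((x + y) / 2) ≤ (1 / 2 : 𝕜) • g x + (1 / 2 : 𝕜) • g y := by
    convert hg.2 hx hy (by norm_num) (by norm_num) (add_halves (1 : 𝕜)) using 2
    simp only [smul_eq_mul]
    ring
  have h₂ : g ((y + z) / 2) + g ((z + x) / 2) ≤ (3 / 2 : 𝕜) • g m + (1 / 2 : 𝕜) • g z :=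
    add_le_of_convexOn_of_mem_segment hg hm hz hyz hzx (by norm_num)
      (by simp only [smul_eq_mul]; linear_combination hsum / 2)
  calc (1 / 3 : 𝕜) • (g ((x + y) / 2) + g ((y + z) / 2) + g ((z + x) / 2))
      = (1 / 3 : 𝕜) • (g ((x + y) / 2) + (g ((y + z) / 2) + g ((z + x) / 2))) := by rw [add_assoc]
    _ ≤ (1 / 3 : 𝕜) • ((1 / 2 : 𝕜) • g x + (1 / 2 : 𝕜) • g y
          + ((3 / 2 : 𝕜) • g m + (1 / 2 : 𝕜) • g z)) :=
        smul_le_smul_of_nonneg_left (add_le_add h₁ h₂) (by norm_num)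
    _ = (1 / 2 : 𝕜) • ((1 / 3 : 𝕜) • (g x + g y + g z) + g m) := by module

theorem popoviciu_of_convexOn_of_mul_nonneg (hg : ConvexOn 𝕜 s g) {x y z m : 𝕜}
    (hx : x ∈ s) (hy : y ∈ s) (hz : z ∈ s) (hm : m ∈ s) (hsum : x + y + z = 3 * m)
    (hside : 0 ≤ (x - m) * (y - m)) :
    (1 / 3 : 𝕜) • (g ((x + y) / 2) + g ((y + z) / 2) + g ((z + x) / 2)) ≤
      (1 / 2 : 𝕜) • ((1 / 3 : 𝕜) • (g x + g y + g z) + g m) := by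
  rcases mul_nonneg_iff.1 hside with ⟨hxm, hym⟩ | ⟨hxm, hym⟩
  · have hzm : z ≤ m := by linarith
    apply popoviciu_of_convexOn_of_mem_segment hg hx hy hz hm hsum <;>
      rw [segment_symm, segment_eq_Icc hzm] <;> constructor <;> linarith
  · have hmz : m ≤ z := by linarith
    apply popoviciu_of_convexOn_of_mem_segment hg hx hy hz hm hsum <;>
      rw [segment_eq_Icc hmz] <;> constructor <;> linarith

theorem popoviciu_of_convexOn (hg : ConvexOn 𝕜 s g) {x y z : 𝕜}
    (hx : x ∈ s) (hy : y ∈ s) (hz : z ∈ s) :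
    (1 / 3 : 𝕜) • (g ((x + y) / 2) + g ((y + z) / 2) + g ((z + x) / 2)) ≤
      (1 / 2 : 𝕜) • ((1 / 3 : 𝕜) • (g x + g y + g z) + g ((x + y + z) / 3)) := by
  have hm : (x + y + z) / 3 ∈ s := add_add_div_three_mem_of_convex hg.1 hx hy hz
  have hsum : x + y + z = 3 * ((x + y + z) / 3) := by ring
  generalize (x + y + z) / 3 = m at hm hsum ⊢
  have pigeonhole : 0 ≤ (x - m) * (y - m) ∨ 0 ≤ (y - m) * (z - m) ∨ 0 ≤ (z - m) * (x - m) := by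
    rcases le_total x m with h₁ | h₁ <;> rcases le_total y m with h₂ | h₂ <;>
      rcases le_total z m with h₃ | h₃ <;> simp [mul_nonneg_iff, *]
  rcases pigeonhole with hxy | hyz | hzx
  · exact popoviciu_of_convexOn_of_mul_nonneg hg hx hy hz hm hsum hxy
  · simpa only [add_comm, add_left_comm, add_assoc] using
      popoviciu_of_convexOn_of_mul_nonneg hg hy hz hx hm (by linarith) hyz
  · simpa only [add_comm, add_left_comm, add_assoc] using
      popoviciu_of_convexOn_of_mul_nonneg hg hz hx hy hm (by linarith) hzx

end Popoviciu

section MidpointConvex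

theorem ordConnected_of_isClosed_of_midpoint_mem {T : Set ℝ} (hT : IsClosed T)
    (hmid : ∀ s ∈ T, ∀ t ∈ T, midpoint ℝ s t ∈ T) : T.OrdConnected := by
  refine ⟨fun a ha b hb x hx => ?_⟩
  obtain ⟨p, ⟨hpT, hp⟩, hp_max⟩ :=
    (isCompact_Icc.inter_left hT).exists_isGreatest ⟨a, ha, left_mem_Icc.2 hx.1⟩
  obtain ⟨q, ⟨hqT, hq⟩, hq_min⟩ :=
    (isCompact_Icc.inter_left hT).exists_isLeast ⟨b, hb, right_mem_Icc.2 hx.2⟩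
  -- `p` and `q` are the points of `T` nearest to `x` on either side; their midpoint lies in `T`.
  have hpq : p ≤ q := hp.2.trans hq.1
  have hqp : q ≤ p := by
    rcases le_total (midpoint ℝ p q) x with h | h
    · exact midpoint_le_left.1 (hp_max ⟨hmid p hpT q hqT, hp.1.trans (left_le_midpoint.2 hpq), h⟩)
    · exact right_le_midpoint.1
        (hq_min ⟨hmid p hpT q hqT, h, (midpoint_le_right.2 hpq).trans hq.2⟩)
  rwa [le_antisymm (hq.1.trans hqp) hp.2]

theorem convexOn_of_continuousOn_of_midpoint_le {E β : Type*}
    [AddCommGroup E] [Module ℝ E] [TopologicalSpace E] [IsTopologicalAddGroup E]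
    [ContinuousSMul ℝ E]
    [AddCommGroup β] [PartialOrder β] [IsOrderedAddMonoid β] [Module ℝ β] [PosSMulMono ℝ β]
    [TopologicalSpace β] [OrderClosedTopology β] [IsTopologicalAddGroup β] [ContinuousSMul ℝ β]
    {K : Set E} {g : E → β} (hK : Convex ℝ K) (hg : ContinuousOn g K)
    (hmid : ∀ u ∈ K, ∀ v ∈ K, g (midpoint ℝ u v) ≤ midpoint ℝ (g u) (g v)) :
    ConvexOn ℝ K g := by
  refine ⟨hK, fun u hu v hv a b ha hb hab => ?_⟩
  let point : ℝ →ᵃ[ℝ] E := AffineMap.lineMap u v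
  let chord : ℝ →ᵃ[ℝ] β := AffineMap.lineMap (g u) (g v)
  have hpoint : MapsTo point (Icc 0 1) K := fun _ ht => hK.lineMap_mem hu hv ht
  let T : Set ℝ := {t ∈ Icc 0 1 | g (point t) ≤ chord t}
  have hT : IsClosed T := isClosed_Icc.isClosed_le
    (hg.comp AffineMap.lineMap_continuous.continuousOn hpoint)
    AffineMap.lineMap_continuous.continuousOn
  have hTmid : ∀ s ∈ T, ∀ t ∈ T, midpoint ℝ s t ∈ T := by
    rintro s ⟨hs, hgs⟩ t ⟨ht, hgt⟩
    refine ⟨(convex_Icc 0 1).midpoint_mem hs ht, ?_⟩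
    rw [AffineMap.map_midpoint, AffineMap.map_midpoint]
    refine (hmid _ (hpoint hs) _ (hpoint ht)).trans ?_
    rw [midpoint_eq_smul_add, midpoint_eq_smul_add]
    exact smul_le_smul_of_nonneg_left (add_le_add hgs hgt) (by norm_num)
  have h₀ : (0 : ℝ) ∈ T := ⟨left_mem_Icc.2 zero_le_one, by simp [point, chord]⟩
  have h₁ : (1 : ℝ) ∈ T := ⟨right_mem_Icc.2 zero_le_one, by simp [point, chord]⟩
  have hbT : b ∈ T := (ordConnected_of_isClosed_of_midpoint_mem hT hTmid).out h₀ h₁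
    ⟨hb, by linarith⟩
  simpa only [point, chord, AffineMap.lineMap_apply_module, ← hab, add_sub_cancel_right]
    using hbT.2

end MidpointConvex

section LeftInverse

variable {α γ : Type*} [LinearOrder α] [TopologicalSpace α] [OrderTopology α]
  [LinearOrder γ] [TopologicalSpace γ] [OrderTopology γ]
  {I : Set α} {φ : α → γ} {φinv : γ → α}

theorem continuousOn_leftInvOn_of_strictMonoOn (hφ : StrictMonoOn φ I) (hI : I.OrdConnected)
    (hφI : (φ '' I).OrdConnected) (hinv : LeftInvOn φinv φ I) :
    ContinuousOn φinv (φ '' I) := by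
  have hsymm : (φ '' I).domRestrict φinv = Subtype.val ∘ (hφ.orderIso φ I).symm := by
    refine funext ((hφ.orderIso φ I).surjective.forall.2 fun x => ?_)
    rw [Function.comp_apply, OrderIso.symm_apply_apply]
    exact hinv x.2
  rw [continuousOn_iff_continuous_domRestrict, hsymm]
  exact continuous_subtype_val.comp (hφ.orderIso φ I).symm.continuous

theorem continuousOn_leftInvOn_of_strictAntiOn (hφ : StrictAntiOn φ I) (hI : I.OrdConnected)
    (hφI : (φ '' I).OrdConnected) (hinv : LeftInvOn φinv φ I) :
    ContinuousOn φinv (φ '' I) :=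
  continuousOn_leftInvOn_of_strictMonoOn (α := αᵒᵈ) hφ.dual_left hI.dual hφI hinv

end LeftInverse

section QuasiArithmetic

variable {α β : Type*}

/-- The quasi-arithmetic mean `M_φ(x, y)` of two points, for a generator `φ` whose inverse on the
relevant interval is the total function `φinv`. -/
noncomputable def quasiArithMean₂ (φ : α → ℝ) (φinv : ℝ → α) (x y : α) : α :=
  φinv ((φ x + φ y) / 2)

/-- The quasi-arithmetic mean `M_φ(x, y, z)` of three points, for a generator `φ` whose inverse on
the relevant interval is the total function `φinv`. -/
noncomputable def quasiArithMean₃ (φ : α → ℝ) (φinv : ℝ → α) (x y z : α) : α :=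
  φinv ((φ x + φ y + φ z) / 3)

section Generator

variable {S : Set α} {φ : α → ℝ} {φinv : ℝ → α} {x y z : α}

theorem quasiArithMean₂_mem (hφ : Convex ℝ (φ '' S)) (hinv : LeftInvOn φinv φ S)
    (hx : x ∈ S) (hy : y ∈ S) : quasiArithMean₂ φ φinv x y ∈ S :=
  hinv.mapsTo (surjOn_image φ S)
    (add_div_two_mem_of_convex hφ (mem_image_of_mem φ hx) (mem_image_of_mem φ hy))

theorem quasiArithMean₃_mem (hφ : Convex ℝ (φ '' S)) (hinv : LeftInvOn φinv φ S)
    (hx : x ∈ S) (hy : y ∈ S) (hz : z ∈ S) : quasiArithMean₃ φ φinv x y z ∈ S :=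
  hinv.mapsTo (surjOn_image φ S) (add_add_div_three_mem_of_convex hφ (mem_image_of_mem φ hx)
    (mem_image_of_mem φ hy) (mem_image_of_mem φ hz))

theorem apply_quasiArithMean₂ (hφ : Convex ℝ (φ '' S)) (hinv : LeftInvOn φinv φ S)
    (hx : x ∈ S) (hy : y ∈ S) : φ (quasiArithMean₂ φ φinv x y) = (φ x + φ y) / 2 :=
  hinv.rightInvOn_image
    (add_div_two_mem_of_convex hφ (mem_image_of_mem φ hx) (mem_image_of_mem φ hy))

theorem apply_quasiArithMean₃ (hφ : Convex ℝ (φ '' S)) (hinv : LeftInvOn φinv φ S)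
    (hx : x ∈ S) (hy : y ∈ S) (hz : z ∈ S) :
    φ (quasiArithMean₃ φ φinv x y z) = (φ x + φ y + φ z) / 3 :=
  hinv.rightInvOn_image (add_add_div_three_mem_of_convex hφ (mem_image_of_mem φ hx)
    (mem_image_of_mem φ hy) (mem_image_of_mem φ hz))

end Generator

variable {I : Set α} {φ : α → ℝ} {ψ : β → ℝ} {f : α → β} {φinv : ℝ → α} {ψinv : ℝ → β}

theorem convexOn_comp_of_le_quasiArithMean₂ [Preorder β]
    (hφ : Convex ℝ (φ '' I)) (hψ : Convex ℝ (ψ '' (f '' I))) (hψm : MonotoneOn ψ (f '' I))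
    (hφinv : LeftInvOn φinv φ I) (hψinv : LeftInvOn ψinv ψ (f '' I))
    (hcont : ContinuousOn (ψ ∘ f ∘ φinv) (φ '' I))
    (hconv : ∀ x ∈ I, ∀ y ∈ I,
      f (quasiArithMean₂ φ φinv x y) ≤ quasiArithMean₂ ψ ψinv (f x) (f y)) :
    ConvexOn ℝ (φ '' I) (ψ ∘ f ∘ φinv) := by
  refine convexOn_of_continuousOn_of_midpoint_le hφ hcont ?_
  rintro _ ⟨x, hx, rfl⟩ _ ⟨y, hy, rfl⟩
  have hfx : f x ∈ f '' I := mem_image_of_mem f hx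
  have hfy : f y ∈ f '' I := mem_image_of_mem f hy
  simp only [Function.comp_apply, midpoint_eq_add_div_two, hφinv hx, hφinv hy]
  calc ψ (f (quasiArithMean₂ φ φinv x y))
      ≤ ψ (quasiArithMean₂ ψ ψinv (f x) (f y)) :=
        hψm (mem_image_of_mem f (quasiArithMean₂_mem hφ hφinv hx hy))
          (quasiArithMean₂_mem hψ hψinv hfx hfy) (hconv x hx y hy)
    _ = (ψ (f x) + ψ (f y)) / 2 := apply_quasiArithMean₂ hψ hψinv hfx hfy

theorem popoviciu_quasiArithMean_of_convexOn [LinearOrder β] (hψ : Convex ℝ (ψ '' (f '' I)))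
    (hψm : StrictMonoOn ψ (f '' I)) (hφinv : LeftInvOn φinv φ I)
    (hψinv : LeftInvOn ψinv ψ (f '' I)) (hg : ConvexOn ℝ (φ '' I) (ψ ∘ f ∘ φinv))
    {x y z : α} (hx : x ∈ I) (hy : y ∈ I) (hz : z ∈ I) :
    quasiArithMean₃ ψ ψinv (f (quasiArithMean₂ φ φinv x y)) (f (quasiArithMean₂ φ φinv y z))
        (f (quasiArithMean₂ φ φinv z x)) ≤
      quasiArithMean₂ ψ ψinv (quasiArithMean₃ ψ ψinv (f x) (f y) (f z))
        (f (quasiArithMean₃ φ φinv x y z)) := by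
  have hf : MapsTo f I (f '' I) := mapsTo_image f I
  have hxy := hf (quasiArithMean₂_mem hg.1 hφinv hx hy)
  have hyz := hf (quasiArithMean₂_mem hg.1 hφinv hy hz)
  have hzx := hf (quasiArithMean₂_mem hg.1 hφinv hz hx)
  have hxyz := hf (quasiArithMean₃_mem hg.1 hφinv hx hy hz)
  have hfxyz := quasiArithMean₃_mem hψ hψinv (hf hx) (hf hy) (hf hz)
  refine (hψm.le_iff_le (quasiArithMean₃_mem hψ hψinv hxy hyz hzx)
    (quasiArithMean₂_mem hψ hψinv hfxyz hxyz)).1 ?_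
  rw [apply_quasiArithMean₃ hψ hψinv hxy hyz hzx, apply_quasiArithMean₂ hψ hψinv hfxyz hxyz,
    apply_quasiArithMean₃ hψ hψinv (hf hx) (hf hy) (hf hz)]
  simpa only [quasiArithMean₂, quasiArithMean₃, Function.comp_apply, smul_eq_mul,
    one_div_mul_eq_div, hφinv hx, hφinv hy, hφinv hz] using
    popoviciu_of_convexOn hg (mem_image_of_mem φ hx) (mem_image_of_mem φ hy) (mem_image_of_mem φ hz)

theorem popoviciu_quasi_arithmetic_increasing_general
    [LinearOrder α] [TopologicalSpace α] [OrderTopology α] [LinearOrder β]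
    (hI : IsPreconnected I) (hφc : ContinuousOn φ I) (hφm : StrictMonoOn φ I ∨ StrictAntiOn φ I)
    (hψfc : ContinuousOn (ψ ∘ f) I) (hψm : StrictMonoOn ψ (f '' I))
    (hφinv : LeftInvOn φinv φ I) (hψinv : LeftInvOn ψinv ψ (f '' I))
    (hconv : ∀ x ∈ I, ∀ y ∈ I,
      f (quasiArithMean₂ φ φinv x y) ≤ quasiArithMean₂ ψ ψinv (f x) (f y))
    {x y z : α} (hx : x ∈ I) (hy : y ∈ I) (hz : z ∈ I) :
    quasiArithMean₃ ψ ψinv (f (quasiArithMean₂ φ φinv x y)) (f (quasiArithMean₂ φ φinv y z))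
        (f (quasiArithMean₂ φ φinv z x)) ≤
      quasiArithMean₂ ψ ψinv (quasiArithMean₃ ψ ψinv (f x) (f y) (f z))
        (f (quasiArithMean₃ φ φinv x y z)) := by
  have hφ : (φ '' I).OrdConnected := (hI.image φ hφc).ordConnected
  have hψ : Convex ℝ (ψ '' (f '' I)) :=
    image_comp ψ f I ▸ (hI.image _ hψfc).ordConnected.convex
  have hφinvc : ContinuousOn φinv (φ '' I) :=
    hφm.elim (continuousOn_leftInvOn_of_strictMonoOn · hI.ordConnected hφ hφinv)
      (continuousOn_leftInvOn_of_strictAntiOn · hI.ordConnected hφ hφinv)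
  have hcont : ContinuousOn (ψ ∘ f ∘ φinv) (φ '' I) :=
    hψfc.comp hφinvc (hφinv.mapsTo (surjOn_image φ I))
  exact popoviciu_quasiArithMean_of_convexOn hψ hψm hφinv hψinv
    (convexOn_comp_of_le_quasiArithMean₂ hφ.convex hψ hψm.monotoneOn hφinv hψinv hcont hconv)
    hx hy hz

end QuasiArithmetic

/-- Popoviciu's inequality for quasi-arithmetic means (increasing case). -/
theorem popoviciu_quasi_arithmetic_increasing (I J : Set ℝ) (hI : Convex ℝ I)
    (hJ : Convex ℝ J) (φ ψ f φinv ψinv : ℝ → ℝ)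
    (hφc : ContinuousOn φ I) (hφm : StrictMonoOn φ I ∨ StrictAntiOn φ I)
    (hψc : ContinuousOn ψ J) (hψm : StrictMonoOn ψ J)
    (hfc : ContinuousOn f I) (hfm : Set.MapsTo f I J)
    (hφinv : ∀ x ∈ I, φinv (φ x) = x) (hφinvm : Set.MapsTo φinv (φ '' I) I)
    (hψinv : ∀ y ∈ J, ψinv (ψ y) = y) (hψinvm : Set.MapsTo ψinv (ψ '' J) J)
    (hconv : ∀ x ∈ I, ∀ y ∈ I,
      f (φinv ((φ x + φ y) / 2)) ≤ ψinv ((ψ (f x) + ψ (f y)) / 2)) :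
    ∀ x ∈ I, ∀ y ∈ I, ∀ z ∈ I,
      ψinv ((1 / 2) * (ψ (ψinv ((ψ (f x) + ψ (f y) + ψ (f z)) / 3)) +
          ψ (f (φinv ((φ x + φ y + φ z) / 3))))) ≥
        ψinv ((1 / 3) * (ψ (f (φinv ((φ x + φ y) / 2))) +
          ψ (f (φinv ((φ y + φ z) / 2))) + ψ (f (φinv ((φ z + φ x) / 2))))) := by
  intro x hx y hy z hz
  have hfI : f '' I ⊆ J := hfm.image_subset
  simpa only [quasiArithMean₂, quasiArithMean₃, one_div_mul_eq_div] using
    popoviciu_quasi_arithmetic_increasing_general hI.isPreconnected hφc hφm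
      (hψc.comp hfc hfm) (hψm.mono hfI) hφinv (LeftInvOn.mono hψinv hfI) hconv hx hy hz
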